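/- Let V be a finite-dimensional complex symplectic vector space and Γ ⊆ Sp(V) a finite subgroup. The natural group homomorphism from the normalizer N_{Sp(V)}(Γ) to the group of automorphisms of ℂ[V]^Γ that preserve the grading and the Poisson bracket, sending g to the automorphism f ↦ f ∘ g^{-1}, is surjective and has kernel exactly Γ. Consequently, the automorphism group of the graded Poisson algebra ℂ[V]^Γ is isomorphic to N_{Sp(V)}(Γ)/Γ. -/

import Mathlib

set_option synthInstance.maxHeartbeats 1000000
set_option maxHeartbeats 1000000
open MvPolynomial

/-- `ℂ[V]` for `V = ℂ^{2n}` in Darboux coordinates indexed by `Fin n ⊕ Fin n`. -/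
abbrev Pn (n : ℕ) : Type := MvPolynomial (Fin n ⊕ Fin n) ℂ

/-- `V = ℂ^{2n}`. -/
abbrev Vn (n : ℕ) : Type := (Fin n ⊕ Fin n) → ℂ

/-- matrices acting on `V`. -/
abbrev Mn (n : ℕ) : Type := Matrix (Fin n ⊕ Fin n) (Fin n ⊕ Fin n) ℂ

/-- the general linear group of `V`. -/
abbrev GLn (n : ℕ) := Matrix.GeneralLinearGroup (Fin n ⊕ Fin n) ℂ

/-- The standard Poisson bracket on `ℂ[V]`:
`{f,g} = Σ_i (∂f/∂x_i ∂g/∂y_i − ∂f/∂y_i ∂g/∂x_i)`. -/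
noncomputable def pbracket (n : ℕ) (f g : Pn n) : Pn n :=
  ∑ i : Fin n,
    (pderiv (Sum.inl i) f * pderiv (Sum.inr i) g -
      pderiv (Sum.inr i) f * pderiv (Sum.inl i) g)

/-- Substitution of a linear change of variables: `substG n A f = f ∘ A` as polynomial
functions, i.e. `X j ↦ Σ_k A j k • X k`. -/
noncomputable def substG (n : ℕ) (A : Mn n) : Pn n →ₐ[ℂ] Pn n :=
  aeval fun j => ∑ k, A j k • X k

/-- The invariants `ℂ[V]^Γ` of a subgroup `Γ ⊆ GL(V)`. -/
noncomputable def invariants (n : ℕ) (Γ : Subgroup (GLn n)) : Subalgebra ℂ (Pn n) where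
  carrier := {f | ∀ γ ∈ Γ, substG n ((γ : GLn n) : Mn n) f = f}
  mul_mem' := fun {a b} ha hb γ hγ => by rw [map_mul, ha γ hγ, hb γ hγ]
  one_mem' := fun γ hγ => map_one _
  add_mem' := fun {a b} ha hb γ hγ => by rw [map_add, ha γ hγ, hb γ hγ]
  zero_mem' := fun γ hγ => map_zero _
  algebraMap_mem' := fun c γ hγ => (substG n ((γ : GLn n) : Mn n)).commutes c


/-- chain rule for a twisted derivation evaluated on a polynomial expression. -/
theorem aux_chain {R S K : Type*} [CommRing R] [CommRing S] [Field K]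
    (i : R →+* S) (φ : S →+* K) (d : S →+ K)
    (hd : ∀ a b, d (a * b) = φ a * d b + φ b * d a) (s : S) (p : Polynomial R) :
    d (p.eval₂ i s) = φ (p.derivative.eval₂ i s) * d s +
      p.sum (fun k c => φ s ^ k * d (i c)) := by
  have h1 : d 1 = 0 := by
    have := hd 1 1
    simp at this
    exact this
  have hpow : ∀ k : ℕ, d (s ^ k) = k * φ s ^ (k - 1) * d s := by
    intro k
    induction k with
    | zero => simp [h1]
    | succ k ih =>
      rw [pow_succ, hd, ih]
      rcases k with _ | k
      · simp
      · simp [pow_succ]; ring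
  induction p using Polynomial.induction_on' with
  | add p q hp hq =>
    rw [Polynomial.eval₂_add, map_add, hp, hq, Polynomial.derivative_add, Polynomial.eval₂_add,
      map_add, Polynomial.sum_add_index]
    · ring
    · intro k; simp
    · intro k a b; simp; ring
  | monomial k a =>
    rw [Polynomial.eval₂_monomial, hd, hpow, Polynomial.derivative_monomial,
      Polynomial.eval₂_monomial, Polynomial.sum_monomial_index]
    · simp; ring
    · simp

/-- twisted derivations vanishing on `R` vanish on everything algebraic over `R`. -/
theorem aux_uniq {R S K : Type*} [CommRing R] [CommRing S] [Field K] [CharZero K]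
    (i : R →+* S) (hi : Function.Injective i) (φ : S →+* K) (hφ : Function.Injective φ)
    (d : S →+ K)
    (hd : ∀ a b, d (a * b) = φ a * d b + φ b * d a) (hR : ∀ r, d (i r) = 0)
    (s : S) (hs : ∃ p : Polynomial R, p ≠ 0 ∧ p.eval₂ i s = 0) : d s = 0 := by
  have hinj : Function.Injective (φ.comp i) := hφ.comp hi
  have hcR : CharZero R := (RingHom.charZero_iff hinj).mpr inferInstance
  have : IsDomain R := hinj.isDomain _
  by_contra hne
  have key : ∀ m : ℕ, ∀ p : Polynomial R, p ≠ 0 → p.eval₂ i s = 0 →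
      p.natDegree = m → False := by
    intro m
    induction m using Nat.strong_induction_on with
    | _ m ih =>
      intro p hp0 hp hm
      have hnd : p.natDegree ≠ 0 := by
        intro h0
        obtain ⟨c, rfl⟩ := Polynomial.natDegree_eq_zero.mp h0
        rw [Polynomial.eval₂_C] at hp
        have := (map_eq_zero_iff _ hi).mp hp
        exact hp0 (by simp [this])
      have hc := aux_chain i φ d hd s p
      have hz : p.sum (fun k c => φ s ^ k * d (i c)) = 0 := by
        simp [Polynomial.sum, hR]
      rw [hz, hp, map_zero, add_zero] at hc
      have h0 : p.derivative.eval₂ i s = 0 := by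
        rcases mul_eq_zero.mp hc.symm with h | h
        · exact (map_eq_zero_iff _ hφ).mp h
        · exact absurd h hne
      refine ih p.derivative.natDegree ?_ p.derivative ?_ h0 rfl
      · rw [← hm]; exact Polynomial.natDegree_derivative_lt hnd
      · intro h
        exact hnd (Polynomial.derivative_eq_zero.mp h)
  obtain ⟨p, hp0, hp⟩ := hs
  exact key _ p hp0 hp rfl

theorem aux_purity {B K : Type*} [CommRing B] [IsDomain B] [UniqueFactorizationMonoid B] [Field K]
    (φ : B →+* K) (hφ : Function.Injective φ) (u : K)
    (halg : ∃ p : Polynomial B, p ≠ 0 ∧ p.eval₂ φ u = 0)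
    (h : ∀ π : B, Irreducible π → ∃ J : B, ¬ π ∣ J ∧ φ.IsIntegralElem (φ J * u)) :
    φ.IsIntegralElem u := by
  let : Algebra B K := φ.toAlgebra
  have : FaithfulSMul B K := (faithfulSMul_iff_algebraMap_injective B K).mpr hφ
  let F := FractionRing B
  let : Algebra F K := FractionRing.liftAlgebra B K
  have : IsScalarTower B F K := FractionRing.isScalarTower_liftAlgebra B K
  have hintegral : IsIntegral F u := by
    have : IsAlgebraic B u := halg
    exact ((IsFractionRing.isAlgebraic_iff B F K).mp this).isIntegral
  set m := minpoly F u with hm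
  have hcoef : ∀ k, ∃ b : B, algebraMap B F b = m.coeff k := by
    intro k
    have hJ : ∀ π : B, Irreducible π → ∃ J : B, ¬ π ∣ J ∧ ∃ b : B,
        algebraMap B F b = algebraMap B F J * m.coeff k := by
      intro π hπ
      obtain ⟨J, hJ, hJi⟩ := h π hπ
      have hJ0 : J ≠ 0 := by rintro rfl; simp at hJ
      by_cases hk : m.natDegree ≤ k
      · rcases hk.eq_or_lt with hk | hk
        · refine ⟨J, hJ, J, ?_⟩
          rw [← hk, (minpoly.monic hintegral).coeff_natDegree, mul_one]
        · refine ⟨J, hJ, 0, ?_⟩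
          rw [Polynomial.coeff_eq_zero_of_natDegree_lt hk]; simp
      · refine ⟨J ^ (m.natDegree - k), fun h => hJ ((hπ.prime).dvd_of_dvd_pow h), ?_⟩
        have h1 := minpoly.isIntegrallyClosed_eq_field_fractions' (R := B) F (s := φ J * u) hJi
        have h2 : φ J * u = (algebraMap B F J) • u := by
          rw [Algebra.smul_def, ← IsScalarTower.algebraMap_apply]; rfl
        have h3 : minpoly F (φ J * u) = m.scaleRoots (algebraMap B F J) := by
          rw [h2, IsIntegrallyClosed.minpoly_smul _ hintegral]
          simpa using hJ0
        refine ⟨(minpoly B (φ J * u)).coeff k, ?_⟩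
        rw [← Polynomial.coeff_map, ← h1, h3, Polynomial.coeff_scaleRoots, map_pow, mul_comm]
    by_cases hu : IsUnit (IsFractionRing.den B (m.coeff k) : B)
    · exact IsFractionRing.isInteger_of_isUnit_den hu
    · exfalso
      obtain ⟨π, hπ, hd⟩ := WfDvdMonoid.exists_irreducible_factor hu
        (nonZeroDivisors.ne_zero (IsFractionRing.den B (m.coeff k)).2)
      obtain ⟨J, hJ, b, hb⟩ := hJ π hπ
      have h4 : algebraMap B F (b * (IsFractionRing.den B (m.coeff k) : B)) =
          algebraMap B F (J * IsFractionRing.num B (m.coeff k)) := by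
        rw [map_mul, hb, map_mul]
        have := IsFractionRing.mk'_num_den B (m.coeff k)
        rw [IsLocalization.mk'_eq_iff_eq_mul] at this
        rw [this]; ring
      have h5 := IsFractionRing.injective B F h4
      have h6 : π ∣ J * IsFractionRing.num B (m.coeff k) := h5 ▸ hd.mul_left b
      rcases hπ.prime.dvd_or_dvd h6 with h7 | h7
      · exact hJ h7
      · exact hπ.not_isUnit ((IsFractionRing.num_den_reduced B (m.coeff k)) h7 hd)
  have hl : m ∈ Polynomial.lifts (algebraMap B F) := by
    rw [Polynomial.lifts_iff_coeff_lifts]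
    intro k; exact hcoef k
  obtain ⟨q, hq, -, hqm⟩ := Polynomial.lifts_and_degree_eq_and_monic hl (minpoly.monic hintegral)
  refine ⟨q, hqm, ?_⟩
  have : Polynomial.aeval u (q.map (algebraMap B F)) = 0 := by rw [hq]; exact minpoly.aeval F u
  rw [Polynomial.aeval_map_algebraMap] at this
  exact this

theorem aux_ext (n : ℕ) (K : Type) [Field K] [Algebra (FractionRing (Pn n)) K] 
   [Algebra.IsAlgebraic (FractionRing (Pn n)) K] (d : Derivation ℂ (Pn n) (Pn n)) : 
   ∃ D : Derivation ℤ K K, ∀ b : Pn n, 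
     D (algebraMap (FractionRing (Pn n)) K (algebraMap (Pn n) (FractionRing (Pn n)) b)) = 
      (algebraMap (FractionRing (Pn n)) K (algebraMap (Pn n) (FractionRing (Pn n)) (d b))) := by
  let L := FractionRing (Pn n)
  let : Algebra (Pn n) K := ((algebraMap L K).comp (algebraMap (Pn n) L)).toAlgebra
  have : IsScalarTower (Pn n) L K := IsScalarTower.of_algebraMap_eq fun _ => rfl
  have : CharZero L := (RingHom.charZero_iff (IsFractionRing.injective (Pn n) L)).mp inferInstance
  have : Algebra.FormallyEtale (Pn n) L := Algebra.FormallyEtale.of_isLocalization (nonZeroDivisors (Pn n))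
  have : Algebra.FormallyEtale L K := Algebra.FormallyEtale.of_isSeparable L K
  have : Algebra.FormallyEtale (Pn n) K := Algebra.FormallyEtale.comp (Pn n) L K
  let e := KaehlerDifferential.tensorKaehlerEquivOfFormallyEtale ℤ (Pn n) K
  let d' : Derivation ℤ (Pn n) K := (Algebra.linearMap (Pn n) K).compDer (d.restrictScalars ℤ)
  let l : Ω[K⁄ℤ] →ₗ[K] K := (LinearMap.liftBaseChange K d'.liftKaehlerDifferential) ∘ₗ e.symm.toLinearMap
  refine ⟨l.compDer (KaehlerDifferential.D ℤ K), fun b => ?_⟩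
  have := KaehlerDifferential.tensorKaehlerEquivOfFormallyEtale_symm_D_algebraMap ℤ (Pn n) K b
  change (LinearMap.liftBaseChange K d'.liftKaehlerDifferential) (e.symm (KaehlerDifferential.D ℤ K (algebraMap (Pn n) K b))) = _
  rw [this]
  simp [d']
  rfl

theorem substG_X (n : ℕ) (A : Mn n) (j) : substG n A (X j) = ∑ k, A j k • X k := by
  simp [substG]

theorem substG_comp (n : ℕ) (A B : Mn n) (f : Pn n) :
    substG n A (substG n B f) = substG n (B * A) f := by
  have : (substG n A).comp (substG n B) = substG n (B * A) := by
    apply MvPolynomial.algHom_ext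
    intro j
    rw [AlgHom.comp_apply, substG_X, substG_X, map_sum]
    simp_rw [map_smul, substG_X, Finset.smul_sum, smul_smul, Matrix.mul_apply, Finset.sum_smul]
    rw [Finset.sum_comm]
  exact DFunLike.congr_fun this f

theorem substG_one (n : ℕ) (f : Pn n) : substG n 1 f = f := by
  have : substG n 1 = AlgHom.id ℂ _ := by
    apply MvPolynomial.algHom_ext
    intro j
    rw [substG_X]
    simp [Matrix.one_apply]
  rw [this]; rfl

/-- the linear form with coefficient vector `v`. -/
noncomputable def linF (n : ℕ) : Vn n →ₗ[ℂ] Pn n where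
  toFun v := ∑ k, v k • X k
  map_add' v w := by simp [add_smul, Finset.sum_add_distrib]
  map_smul' c v := by simp [Finset.smul_sum, smul_smul]

theorem linF_apply (n : ℕ) (v : Vn n) : linF n v = ∑ k, v k • X k := rfl

theorem linF_single (n : ℕ) (j) : linF n (Pi.single j 1) = X j := by
  rw [linF_apply]
  rw [Finset.sum_eq_single j] <;> simp +contextual

theorem substG_linF (n : ℕ) (A : Mn n) (v : Vn n) :
    substG n A (linF n v) = linF n (Matrix.vecMul v A) := by
  rw [linF_apply, linF_apply, map_sum]
  simp_rw [map_smul, substG_X, Finset.smul_sum, smul_smul, Matrix.vecMul, dotProduct,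
    Finset.sum_smul]
  rw [Finset.sum_comm]

theorem pderiv_linF (n : ℕ) (v : Vn n) (j) : pderiv j (linF n v) = C (v j) := by
  rw [linF_apply, map_sum, Finset.sum_eq_single j]
  · simp [MvPolynomial.smul_eq_C_mul]
  · intro k _ hk
    simp [pderiv_X_of_ne hk]
  · simp

theorem linF_inj (n : ℕ) : Function.Injective (linF n) := by
  intro v w h
  funext j
  have := congrArg (pderiv j) h
  rw [pderiv_linF, pderiv_linF] at this
  exact C_injective _ _ this

theorem linF_hom (n : ℕ) (v : Vn n) : (linF n v).IsHomogeneous 1 := by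
  rw [linF_apply]
  apply IsHomogeneous.sum
  intro k _
  rw [MvPolynomial.smul_eq_C_mul]
  exact (isHomogeneous_X ℂ k).C_mul _

theorem substG_hom (n : ℕ) (A : Mn n) (f : Pn n) (i : ℕ) (hf : f.IsHomogeneous i) :
    (substG n A f).IsHomogeneous i := by
  have := hf.aeval (fun j => ∑ k, A j k • (X k : Pn n)) (n := 1) (fun j => linF_hom n (A j))
  rw [one_mul] at this
  exact this

theorem substG_homComp (n : ℕ) (A : Mn n) (f : Pn n) (i : ℕ) :
    homogeneousComponent i (substG n A f) = substG n A (homogeneousComponent i f) := by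
  conv_lhs => rw [← sum_homogeneousComponent f, map_sum, map_sum]
  have : ∀ k, homogeneousComponent i (substG n A (homogeneousComponent k f)) =
      if k = i then substG n A (homogeneousComponent k f) else 0 := by
    intro k
    rw [homogeneousComponent_of_mem (substG_hom n A _ k (homogeneousComponent_isHomogeneous k f))]
    simp [eq_comm]
  simp_rw [this]
  rw [Finset.sum_ite_eq']
  split_ifs with h
  · rfl
  · rw [homogeneousComponent_eq_zero, map_zero]
    simpa using h

theorem homComp_mem (n : ℕ) (Γ : Subgroup (GLn n)) (f : Pn n) (hf : f ∈ invariants n Γ) (i : ℕ) :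
    homogeneousComponent i f ∈ invariants n Γ := by
  intro γ hγ
  rw [← substG_homComp, hf γ hγ]

theorem pderiv_substG (n : ℕ) (A : Mn n) (f : Pn n) (j) :
    pderiv j (substG n A f) = ∑ k, A k j • substG n A (pderiv k f) := by
  induction f using MvPolynomial.induction_on with
  | C a => simp [substG]
  | add p q hp hq => simp [hp, hq, Finset.sum_add_distrib]
  | mul_X p i hp =>
    rw [map_mul, Derivation.leibniz, hp]
    have h1 : pderiv j (substG n A (X i)) = C (A i j) := by
      rw [substG_X]; exact pderiv_linF n (A i) j
    have h2 : ∀ k, pderiv k (p * X i) = pderiv k p * X i + if k = i then p else 0 := by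
      intro k
      rw [Derivation.leibniz]
      split_ifs with h
      · subst h; simp; ring
      · simp [pderiv_X_of_ne (Ne.symm h)]; ring
    simp_rw [h1, h2, map_add, smul_add, Finset.sum_add_distrib, map_mul]
    rw [add_comm]
    congr 1
    · rw [smul_eq_mul, Finset.mul_sum]
      refine Finset.sum_congr rfl fun k _ => ?_
      rw [MvPolynomial.smul_eq_C_mul, MvPolynomial.smul_eq_C_mul]
      ring
    · rw [Finset.sum_eq_single i] <;> simp +contextual [MvPolynomial.smul_eq_C_mul]; ring

/-- Euler operator -/
noncomputable def eulerE (n : ℕ) (f : Pn n) : Pn n := ∑ j, X j * pderiv j f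

theorem eulerE_hom (n : ℕ) (f : Pn n) (i : ℕ) (hf : f.IsHomogeneous i) : eulerE n f = i • f := 
  hf.sum_X_mul_pderiv

theorem eulerE_sum (n : ℕ) {ι} (s : Finset ι) (f : ι → Pn n) :
    eulerE n (∑ i ∈ s, f i) = ∑ i ∈ s, eulerE n (f i) := by
  simp only [eulerE, map_sum, Finset.mul_sum]
  exact Finset.sum_comm

theorem eulerE_zero (n : ℕ) (f : Pn n) (hf : eulerE n f = 0) : ∃ c, f = C c := by
  have h : ∀ i, i ≠ 0 → homogeneousComponent i f = 0 := by
    intro i hi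
    have h1 : homogeneousComponent i (eulerE n f) = i • homogeneousComponent i f := by
      conv_lhs => rw [← sum_homogeneousComponent f, eulerE_sum, map_sum]
      have : ∀ k, homogeneousComponent i (eulerE n (homogeneousComponent k f)) =
          if k = i then k • (homogeneousComponent k f) else 0 := by
        intro k
        rw [eulerE_hom n _ k (homogeneousComponent_isHomogeneous k f), map_nsmul,
          homogeneousComponent_of_mem (homogeneousComponent_isHomogeneous k f)]
        simp [eq_comm]
      simp_rw [this]
      rw [Finset.sum_ite_eq']
      split_ifs with h
      · rfl
      · rw [homogeneousComponent_eq_zero, smul_zero]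
        simpa using h
    rw [hf, map_zero] at h1
    have := h1.symm
    rw [nsmul_eq_mul, mul_eq_zero] at this
    rcases this with h | h
    · exact absurd (by exact_mod_cast h) hi
    · exact h
  refine ⟨coeff 0 f, ?_⟩
  conv_lhs => rw [← sum_homogeneousComponent f]
  rw [Finset.sum_eq_single 0, homogeneousComponent_zero]
  · intro b _ hb; exact h b hb
  · simp

theorem galois_poly (n : ℕ) (Γ : Subgroup (GLn n)) [Fintype Γ] (b : Pn n) :
    ∃ P : Polynomial (invariants n Γ), P.Monic ∧
      P.map (algebraMap (invariants n Γ) (Pn n)) =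
        ∏ γ : Γ, (Polynomial.X - Polynomial.C (substG n ((γ : GLn n) : Mn n) b)) := by
  set Q : Polynomial (Pn n) :=
    ∏ γ : Γ, (Polynomial.X - Polynomial.C (substG n ((γ : GLn n) : Mn n) b)) with hQ
  have hmon : Q.Monic := Polynomial.monic_prod_of_monic _ _ fun _ _ => Polynomial.monic_X_sub_C _
  have hinv : ∀ δ ∈ Γ, Q.map (substG n ((δ : GLn n) : Mn n)).toRingHom = Q := by
    intro δ hδ
    rw [hQ, Polynomial.map_prod]
    simp only [Polynomial.map_sub, Polynomial.map_X, Polynomial.map_C]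
    refine Fintype.prod_equiv (Equiv.mulRight ⟨δ, hδ⟩) _ _ ?_
    intro γ
    simp [substG_comp]
  have hl : Q ∈ Polynomial.lifts (algebraMap (invariants n Γ) (Pn n)) := by
    rw [Polynomial.lifts_iff_coeff_lifts]
    intro k
    refine ⟨⟨Q.coeff k, fun δ hδ => ?_⟩, rfl⟩
    conv_rhs => rw [← hinv δ hδ, Polynomial.coeff_map]
    rfl
  obtain ⟨P, hP, -, hPm⟩ := Polynomial.lifts_and_degree_eq_and_monic hl hmon
  exact ⟨P, hPm, hP⟩

theorem galois_root (n : ℕ) (Γ : Subgroup (GLn n)) [Fintype Γ] (b : Pn n)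
    (P : Polynomial (invariants n Γ))
    (hP : P.map (algebraMap (invariants n Γ) (Pn n)) =
        ∏ γ : Γ, (Polynomial.X - Polynomial.C (substG n ((γ : GLn n) : Mn n) b))) :
    P.eval₂ (algebraMap (invariants n Γ) (Pn n)) b = 0 := by
  rw [Polynomial.eval₂_eq_eval_map, hP, Polynomial.eval_prod]
  apply Finset.prod_eq_zero (Finset.mem_univ (1 : Γ))
  simp [substG_one]

theorem galois_deriv (n : ℕ) (Γ : Subgroup (GLn n)) [Fintype Γ] [DecidableEq Γ] (b : Pn n)
    (P : Polynomial (invariants n Γ))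
    (hP : P.map (algebraMap (invariants n Γ) (Pn n)) =
        ∏ γ : Γ, (Polynomial.X - Polynomial.C (substG n ((γ : GLn n) : Mn n) b))) :
    P.derivative.eval₂ (algebraMap (invariants n Γ) (Pn n)) b =
      ∏ γ ∈ Finset.univ.erase (1 : Γ), (b - substG n ((γ : GLn n) : Mn n) b) := by
  rw [Polynomial.eval₂_eq_eval_map, ← Polynomial.derivative_map, hP,
    ← Finset.mul_prod_erase _ _ (Finset.mem_univ (1 : Γ)), Polynomial.derivative_mul]
  simp [substG_one, Polynomial.eval_prod]

/-- only elements of `Γ` act trivially on the invariants. -/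
theorem ker_lemma (n : ℕ) (Γ : Subgroup (GLn n)) (hfin : Finite Γ) (g : GLn n)
    (h : ∀ f ∈ invariants n Γ, substG n (g : Mn n) f = f) : g ∈ Γ := by
  classical
  have := Fintype.ofFinite Γ
  let W : Γ → Subspace ℂ (Vn n) := fun γ =>
    LinearMap.ker (Matrix.vecMulLinear ((g : Mn n) - ((γ : GLn n) : Mn n)))
  have hcov : ∀ v : Vn n, ∃ γ : Γ, v ∈ W γ := by
    intro v
    obtain ⟨P, hPm, hP⟩ := galois_poly n Γ (linF n v)
    have h0 := galois_root n Γ _ P hP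
    have h1 := congrArg (substG n (g : Mn n)).toRingHom h0
    rw [Polynomial.hom_eval₂, map_zero] at h1
    have h2 : (substG n (g : Mn n)).toRingHom.comp (algebraMap (invariants n Γ) (Pn n)) =
        algebraMap (invariants n Γ) (Pn n) := by
      ext1 a
      exact h a.1 a.2
    rw [h2, Polynomial.eval₂_eq_eval_map, hP, Polynomial.eval_prod, Finset.prod_eq_zero_iff] at h1
    obtain ⟨γ, -, h3⟩ := h1
    refine ⟨γ, ?_⟩
    simp only [Polynomial.eval_sub, Polynomial.eval_X, Polynomial.eval_C] at h3
    have h4 : linF n (Matrix.vecMul v (g : Mn n)) = linF n (Matrix.vecMul v ((γ : GLn n) : Mn n)) := by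
      rw [← substG_linF, ← substG_linF]
      exact sub_eq_zero.mp h3
    have h5 := linF_inj n h4
    simp [W, h5]
  have htop : (⊤ : Subspace ℂ (Vn n)) ∈ Finset.univ.image W := by
    apply Subspace.top_mem_of_biUnion_eq_univ
    ext v
    obtain ⟨γ, hγ⟩ := hcov v
    simp only [Set.mem_iUnion, Set.mem_univ, iff_true]
    exact ⟨W γ, by simp, hγ⟩
  obtain ⟨γ, -, hγ⟩ := Finset.mem_image.mp htop
  have : (g : Mn n) = ((γ : GLn n) : Mn n) := by
    ext i j
    have h6 : Pi.single i 1 ∈ W γ := by rw [hγ]; trivial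
    have h7 := congrFun (LinearMap.mem_ker.mp h6) j
    simp at h7
    exact sub_eq_zero.mp h7
  have : g = (γ : GLn n) := Units.ext this
  rw [this]; exact γ.2

theorem lin_dvd (n : ℕ) (π : Pn n) (hπ : Irreducible π) (v : Vn n) (h : π ∣ linF n v) :
    ∃ c : ℂ, linF n v = C c * π := by
  by_cases hv : linF n v = 0
  · exact ⟨0, by simp [hv]⟩
  obtain ⟨q, hq⟩ := h
  have hq0 : q ≠ 0 := by rintro rfl; simp at hq; exact hv hq
  have h1 := totalDegree_mul_of_isDomain hπ.ne_zero hq0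
  rw [← hq, (linF_hom n v).totalDegree hv] at h1
  have h2 : π.totalDegree ≠ 0 := by
    intro h0
    rw [totalDegree_eq_zero_iff_eq_C] at h0
    apply hπ.not_isUnit
    rw [h0]
    apply IsUnit.map
    rw [isUnit_iff_ne_zero]
    intro h3
    rw [h3, map_zero] at h0
    exact hπ.ne_zero h0
  have h3 : q.totalDegree = 0 := by omega
  rw [totalDegree_eq_zero_iff_eq_C] at h3
  exact ⟨_, by rw [hq, mul_comm]; congr 1⟩

theorem no_refl (n : ℕ) (Γ : Subgroup (GLn n)) (hfin : Finite Γ)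
    (hsp : ∀ γ ∈ Γ, ((γ : GLn n) : Mn n) ∈ Matrix.symplecticGroup (Fin n) ℂ)
    (γ : GLn n) (hγ : γ ∈ Γ) (h1 : γ ≠ 1) (π : Pn n) (hπ : Irreducible π) :
    ∃ v : Vn n, ¬ π ∣ linF n v - substG n (γ : Mn n) (linF n v) := by
  by_contra! hcon
  apply h1
  set N : Mn n := 1 - (γ : Mn n) with hN
  have hrow : ∀ v : Vn n, linF n v - substG n (γ : Mn n) (linF n v) = linF n (Matrix.vecMul v N) := by
    intro v
    rw [substG_linF, ← map_sub, hN, Matrix.vecMul_sub, Matrix.vecMul_one]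
  have hc : ∀ i, ∃ c : ℂ, linF n (N i) = C c * π := by
    intro i
    apply lin_dvd n π hπ
    have := hcon (Pi.single i 1)
    rw [hrow, Matrix.single_one_vecMul] at this
    exact this
  choose a ha using hc
  -- N is of the form a bᵀ
  have hab : ∃ b : Vn n, N = Matrix.vecMulVec a b := by
    by_cases h0 : ∃ i, a i ≠ 0
    · obtain ⟨i, hi⟩ := h0
      refine ⟨(a i)⁻¹ • N i, ?_⟩
      ext j k
      have : linF n (N j) = linF n (a j • (a i)⁻¹ • N i) := by
        rw [map_smul, map_smul, ha, ha, MvPolynomial.smul_eq_C_mul, MvPolynomial.smul_eq_C_mul,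
          ← mul_assoc (C (a i)⁻¹), ← map_mul, inv_mul_cancel₀ hi]
        simp
      have := congrFun (linF_inj n this) k
      simpa [Matrix.vecMulVec_apply] using this
    · push Not at h0
      refine ⟨0, ?_⟩
      ext j k
      have : linF n (N j) = linF n 0 := by rw [ha, h0]; simp
      simpa [Matrix.vecMulVec_apply] using congrFun (linF_inj n this) k
  obtain ⟨b, hb⟩ := hab
  have hNJN : N * Matrix.J (Fin n) ℂ * N.transpose = 0 := by
    have hz : Matrix.vecMul b (Matrix.J (Fin n) ℂ) ⬝ᵥ b = 0 := by
      simp [dotProduct, Matrix.vecMul, Matrix.J, Fintype.sum_sum_type, Matrix.fromBlocks, Matrix.one_apply]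
      rw [← sub_eq_add_neg, sub_eq_zero]
      exact Finset.sum_congr rfl fun i _ => mul_comm _ _
    rw [hb, Matrix.transpose_vecMulVec, Matrix.vecMulVec_mul, Matrix.vecMulVec_mul_vecMulVec, hz]
    simp
  have hs := hsp γ hγ
  rw [SymplecticGroup.mem_iff] at hs
  have hγN : (γ : Mn n) = 1 - N := by rw [hN]; abel
  rw [hγN, Matrix.transpose_sub, Matrix.transpose_one] at hs
  have h2 : N * Matrix.J (Fin n) ℂ = - (Matrix.J (Fin n) ℂ * N.transpose) := by
    have : (1 - N) * Matrix.J (Fin n) ℂ * (1 - N.transpose) = Matrix.J (Fin n) ℂ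
        - N * Matrix.J (Fin n) ℂ - Matrix.J (Fin n) ℂ * N.transpose
        + N * Matrix.J (Fin n) ℂ * N.transpose := by noncomm_ring
    rw [this, hNJN, add_zero, sub_sub, sub_eq_self] at hs
    exact eq_neg_of_add_eq_zero_left hs
  have h3 : N * N = 0 := by
    have h4 : N * N * Matrix.J (Fin n) ℂ = 0 := by
      rw [mul_assoc, h2, mul_neg, ← mul_assoc, hNJN, neg_zero]
    have h5 : N * N * Matrix.J (Fin n) ℂ * Matrix.J (Fin n) ℂ = 0 := by rw [h4, zero_mul]
    rw [mul_assoc, Matrix.J_squared] at h5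
    simpa using h5
  have hpow : ∀ m : ℕ, (1 - N) ^ m = 1 - (m : ℂ) • N := by
    intro m
    induction m with
    | zero => simp
    | succ m ih =>
      have hN1 : N * (1 - N) = N := by rw [mul_sub, mul_one, h3, sub_zero]
      rw [pow_succ, ih, sub_mul, one_mul, smul_mul_assoc, hN1, Nat.cast_succ, add_smul, one_smul]
      abel
  obtain ⟨m, hm, hm1⟩ := (isOfFinOrder_iff_pow_eq_one.mp (isOfFinOrder_of_finite (⟨γ, hγ⟩ : Γ)))
  have h6 : (γ : Mn n) ^ m = 1 := by
    have := congrArg (fun x : Γ => ((x : GLn n) : Mn n)) hm1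
    simpa using this
  rw [hγN, hpow, sub_eq_self] at h6
  have h7 : N = 0 := by
    rcases smul_eq_zero.mp h6 with h | h
    · exact absurd (by exact_mod_cast h) hm.ne'
    · exact h
  apply Units.ext
  rw [hγN, h7]; simp

theorem aux_trans {R S T : Type*} [CommRing R] [CommRing S] [CommRing T]
    (f : R →+* S) (g : S →+* T) (hf : f.IsIntegral) (x : T) (hx : g.IsIntegralElem x) :
    (g.comp f).IsIntegralElem x := by
  let : Algebra R S := f.toAlgebra
  let : Algebra S T := g.toAlgebra
  let : Algebra R T := (g.comp f).toAlgebra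
  have : IsScalarTower R S T := IsScalarTower.of_algebraMap_eq fun _ => rfl
  have : Algebra.IsIntegral R S := ⟨hf⟩
  exact isIntegral_trans (R := R) (A := S) x hx

theorem aux_algtrans {R S T : Type*} [CommRing R] [CommRing S] [CommRing T] [IsDomain R] [IsDomain S]
    (f : R →+* S) (g : S →+* T) (hfi : Function.Injective f)
    (hf : f.IsIntegral) (x : T) (hx : ∃ p : Polynomial S, p ≠ 0 ∧ p.eval₂ g x = 0) :
    ∃ p : Polynomial R, p ≠ 0 ∧ p.eval₂ (g.comp f) x = 0 := by
  let : Algebra R S := f.toAlgebra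
  let : Algebra S T := g.toAlgebra
  let : Algebra R T := (g.comp f).toAlgebra
  have : IsScalarTower R S T := IsScalarTower.of_algebraMap_eq fun _ => rfl
  have : FaithfulSMul R S := (faithfulSMul_iff_algebraMap_injective R S).mpr hfi
  have : Algebra.IsIntegral R S := ⟨hf⟩
  have h : IsAlgebraic S x := hx
  exact h.restrictScalars R

theorem aux_const (n : ℕ) (K : Type*) [Field K] (i : Pn n →+* K) (hi : Function.Injective i)
    (E : Derivation ℤ K K) (hE : ∀ b, E (i b) = i (eulerE n b)) (u : K)
    (hu : i.IsIntegralElem u) (h0 : E u = 0) : ∃ c : ℂ, u = i (C c) := by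
  let : Algebra (Pn n) K := i.toAlgebra
  have : FaithfulSMul (Pn n) K := (faithfulSMul_iff_algebraMap_injective _ K).mpr hi
  have hu' : IsIntegral (Pn n) u := hu
  set p := minpoly (Pn n) u with hp
  have hpm : p.Monic := minpoly.monic hu'
  have hpu : p.eval₂ i u = 0 := minpoly.aeval (Pn n) u
  have hc := aux_chain i (RingHom.id K) (E : K →+ K) (fun a b => by simp) u p
  have hz : p.sum (fun k c => u ^ k * i (eulerE n c)) = 0 := by
    simpa [hpu, h0, hE] using hc.symm
  let q : Polynomial (Pn n) := p.sum fun k c => Polynomial.monomial k (eulerE n c)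
  have hE0 : eulerE n 0 = 0 := by simp [eulerE]
  have hE1 : eulerE n 1 = 0 := by simp [eulerE]
  have hqc : ∀ k, q.coeff k = eulerE n (p.coeff k) := by
    intro k
    simp only [q, Polynomial.sum, Polynomial.finsetSum_coeff, Polynomial.coeff_monomial]
    rw [Finset.sum_ite_eq']
    split_ifs with h
    · rfl
    · rw [Polynomial.notMem_support_iff.mp h, hE0]
  have hqu : Polynomial.aeval u q = 0 := by
    rw [← hz]
    simp only [q, Polynomial.sum, map_sum, Polynomial.aeval_monomial]
    refine Finset.sum_congr rfl fun k _ => ?_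
    rw [mul_comm]; rfl
  have hq0 : q = 0 := by
    by_contra hq
    have h1 := minpoly.IsIntegrallyClosed.degree_le_of_ne_zero hq hqu
    have h2 : q.degree < p.degree := by
      rw [Polynomial.degree_eq_natDegree hpm.ne_zero, Polynomial.degree_lt_iff_coeff_zero]
      intro m hm
      rw [hqc]
      rcases hm.eq_or_lt with h | h
      · rw [← h, hpm.coeff_natDegree, hE1]
      · rw [Polynomial.coeff_eq_zero_of_natDegree_lt h, hE0]
    exact absurd h1 (not_le.mpr h2)
  have hcst : ∀ k, ∃ c : ℂ, p.coeff k = C c := by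
    intro k
    apply eulerE_zero
    rw [← hqc, hq0, Polynomial.coeff_zero]
  have hl : p ∈ Polynomial.lifts (C : ℂ →+* Pn n) := by
    rw [Polynomial.lifts_iff_coeff_lifts]
    intro k
    obtain ⟨c, hc⟩ := hcst k
    exact ⟨c, hc.symm⟩
  obtain ⟨r, hr, -, hrm⟩ := Polynomial.lifts_and_degree_eq_and_monic hl hpm
  let : Algebra ℂ K := (i.comp C).toAlgebra
  have hintegral : IsIntegral ℂ u := by
    refine ⟨r, hrm, ?_⟩
    rw [← hr, Polynomial.eval₂_map] at hpu
    exact hpu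
  have h3 := IsAlgClosed.degree_eq_one_of_irreducible ℂ (minpoly.irreducible hintegral)
  obtain ⟨c, hc⟩ := minpoly.mem_range_of_degree_eq_one ℂ u h3
  exact ⟨c, hc.symm⟩

theorem pderiv_comm' (n : ℕ) (j k : Fin n ⊕ Fin n) (b : Pn n) : pderiv j (pderiv k b) = pderiv k (pderiv j b) := by
  have h : ⁅(pderiv j : Derivation ℂ (Pn n) (Pn n)), (pderiv k : Derivation ℂ (Pn n) (Pn n))⁆ = 0 := by
    apply MvPolynomial.derivation_ext
    intro l
    rw [Derivation.commutator_apply]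
    classical
    simp [pderiv_X, Pi.single_apply, apply_ite]
  have := DFunLike.congr_fun h b
  rw [Derivation.commutator_apply] at this
  exact sub_eq_zero.mp this

theorem eulerE_pderiv (n : ℕ) (j : Fin n ⊕ Fin n) (b : Pn n) :
    eulerE n (pderiv j b) - pderiv j (eulerE n b) + pderiv j b = 0 := by
  simp only [eulerE, map_sum, Derivation.leibniz, Finset.sum_add_distrib, smul_eq_mul]
  have : ∑ k, pderiv k b * pderiv j (X k : Pn n) = pderiv j b := by
    rw [Finset.sum_eq_single j]
    · simp
    · intro k _ hk; simp [pderiv_X_of_ne hk]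
    · simp
  rw [this]
  simp_rw [pderiv_comm' n j]
  ring

theorem incl_integral (n : ℕ) (Γ : Subgroup (GLn n)) [Fintype Γ] :
    (algebraMap (invariants n Γ) (Pn n)).IsIntegral := by
  intro b
  obtain ⟨P, hPm, hP⟩ := galois_poly n Γ b
  exact ⟨P, hPm, galois_root n Γ b P hP⟩

theorem incl_inj (n : ℕ) (Γ : Subgroup (GLn n)) :
    Function.Injective (algebraMap (invariants n Γ) (Pn n)) := Subtype.val_injective

/-- integrality of derivatives -/
theorem core_int (n : ℕ) (Γ : Subgroup (GLn n)) (hfin : Finite Γ)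
    (hsp : ∀ γ ∈ Γ, ((γ : GLn n) : Mn n) ∈ Matrix.symplecticGroup (Fin n) ℂ)
    (K : Type*) [Field K] (φ : Pn n →+* K) (hφ : Function.Injective φ)
    (halg : ∀ u : K, ∃ p : Polynomial (Pn n), p ≠ 0 ∧ p.eval₂ φ u = 0)
    (D : Derivation ℤ K K)
    (hD : ∀ a : invariants n Γ, φ.IsIntegralElem (D (φ (a : Pn n)))) (v : Vn n) :
    φ.IsIntegralElem (D (φ (linF n v))) := by
  classical
  have := Fintype.ofFinite Γ
  let d : Pn n →+ K := (D : K →+ K).comp (φ : Pn n →+ K)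
  have hd : ∀ a b, d (a * b) = φ a * d b + φ b * d a := by
    intro a b; simp [d]
  have claim1 : ∀ v : Vn n, φ.IsIntegralElem
      (φ (∏ γ ∈ Finset.univ.erase (1 : Γ), (linF n v - substG n ((γ : GLn n) : Mn n) (linF n v)))
        * D (φ (linF n v))) := by
    intro v
    obtain ⟨P, hPm, hP⟩ := galois_poly n Γ (linF n v)
    have hc := aux_chain (algebraMap (invariants n Γ) (Pn n)) φ d hd (linF n v) P
    rw [galois_root n Γ _ P hP, galois_deriv n Γ _ P hP, map_zero] at hc
    have h1 := eq_neg_of_add_eq_zero_left hc.symm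
    change φ.IsIntegralElem (φ _ * d _)
    rw [h1]
    apply RingHom.IsIntegralElem.neg
    rw [Polynomial.sum]
    let S : Subring K := 
      { carrier := {x | φ.IsIntegralElem x}
        mul_mem' := fun ha hb => ha.mul φ hb
        one_mem' := φ.isIntegralElem_one
        add_mem' := fun ha hb => ha.add φ hb
        zero_mem' := φ.isIntegralElem_zero
        neg_mem' := fun ha => ha.neg φ }
    change _ ∈ S
    refine Subring.sum_mem S fun k _ => S.mul_mem (S.pow_mem φ.isIntegralElem_map _) ?_
    exact hD (P.coeff k)
  apply aux_purity φ hφ _ (halg _)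
  intro π hπ
  let W : Γ → Subspace ℂ (Vn n) := fun γ =>
    { carrier := {v | π ∣ linF n v - substG n ((γ : GLn n) : Mn n) (linF n v)}
      add_mem' := by
        intro a b ha hb
        have : linF n (a + b) - substG n ((γ : GLn n) : Mn n) (linF n (a + b)) =
          (linF n a - substG n ((γ : GLn n) : Mn n) (linF n a)) +
          (linF n b - substG n ((γ : GLn n) : Mn n) (linF n b)) := by
          simp only [map_add]; ring
        change π ∣ _
        rw [this]
        exact dvd_add ha hb
      zero_mem' := by simp
      smul_mem' := by
        intro c a ha
        change π ∣ _
        rw [map_smul, map_smul, ← smul_sub, MvPolynomial.smul_eq_C_mul]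
        exact Dvd.dvd.mul_left ha _ }
  have hW : ∀ γ : Γ, γ ≠ 1 → W γ ≠ ⊤ := by
    intro γ hγ htop
    obtain ⟨v, hv⟩ := no_refl n Γ hfin hsp γ γ.2 (by simpa using hγ) π hπ
    apply hv
    have : v ∈ W γ := by rw [htop]; trivial
    exact this
  let G : Set (Vn n) := {v | ∀ γ : Γ, γ ≠ 1 → v ∉ W γ}
  have hspan : Submodule.span ℂ G = ⊤ := by
    by_contra hne
    let s : Finset (Subspace ℂ (Vn n)) :=
      insert (Submodule.span ℂ G) ((Finset.univ.erase (1 : Γ)).image W)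
    have h1 : (⊤ : Subspace ℂ (Vn n)) ∈ s := by
      apply Subspace.top_mem_of_biUnion_eq_univ
      ext v
      simp only [Set.mem_iUnion, Set.mem_univ, iff_true]
      by_cases hv : v ∈ G
      · exact ⟨_, Finset.mem_insert_self _ _, Submodule.subset_span hv⟩
      · simp only [G, Set.mem_ofPred_eq, not_forall, not_not] at hv
        obtain ⟨γ, hγ, hv⟩ := hv
        refine ⟨W γ, Finset.mem_insert_of_mem (Finset.mem_image_of_mem _ ?_), hv⟩
        simpa using hγ
    rcases Finset.mem_insert.mp h1 with h | h
    · exact hne h.symm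
    · obtain ⟨γ, hγ, h⟩ := Finset.mem_image.mp h
      exact hW γ (Finset.ne_of_mem_erase hγ) h
  have hv : v ∈ Submodule.span ℂ G := by rw [hspan]; trivial
  induction hv using Submodule.span_induction with
  | mem v hv =>
    refine ⟨_, ?_, claim1 v⟩
    intro hdvd
    rw [hπ.prime.dvd_finsetProd_iff] at hdvd
    obtain ⟨γ, hγ, h⟩ := hdvd
    exact hv γ (Finset.ne_of_mem_erase hγ) h
  | zero => exact ⟨1, fun h => hπ.not_isUnit (isUnit_of_dvd_one h), by simpa using φ.isIntegralElem_zero⟩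
  | add x y _ _ hx hy =>
    obtain ⟨J, hJ, hJi⟩ := hx
    obtain ⟨J', hJ', hJi'⟩ := hy
    refine ⟨J * J', fun h => (hπ.prime.dvd_or_dvd h).elim hJ hJ', ?_⟩
    have : φ (J * J') * D (φ (linF n (x + y))) =
        φ J' * (φ J * D (φ (linF n x))) + φ J * (φ J' * D (φ (linF n y))) := by
      simp only [map_add, map_mul]; ring
    rw [this]
    exact RingHom.IsIntegralElem.add φ (φ.isIntegralElem_map.mul φ hJi)
      (φ.isIntegralElem_map.mul φ hJi')
  | smul c x _ hx =>
    obtain ⟨J, hJ, hJi⟩ := hx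
    refine ⟨J, hJ, ?_⟩
    have hC : φ.IsIntegralElem (D (φ (C c))) :=
      hD (algebraMap ℂ (invariants n Γ) c)
    have : φ J * D (φ (linF n (c • x))) =
        φ (C c) * (φ J * D (φ (linF n x))) + φ J * φ (linF n x) * D (φ (C c)) := by
      rw [map_smul, MvPolynomial.smul_eq_C_mul, map_mul, Derivation.leibniz]
      simp only [smul_eq_mul]; ring
    rw [this]
    exact RingHom.IsIntegralElem.add φ (φ.isIntegralElem_map.mul φ hJi)
      ((φ.isIntegralElem_map.mul φ φ.isIntegralElem_map).mul φ hC)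

theorem core (n : ℕ) (Γ : Subgroup (GLn n)) (hfin : Finite Γ)
    (hsp : ∀ γ ∈ Γ, ((γ : GLn n) : Mn n) ∈ Matrix.symplecticGroup (Fin n) ℂ)
    (ψ : invariants n Γ ≃ₐ[ℂ] invariants n Γ)
    (hψ : ∀ (i : ℕ) (f : invariants n Γ), (f : Pn n).IsHomogeneous i →
        ((ψ f : invariants n Γ) : Pn n).IsHomogeneous i)
    (K : Type*) [Field K] [CharZero K] (i φ : Pn n →+* K) (hi : Function.Injective i)
    (hφ : Function.Injective φ)
    (hφψ : ∀ a : invariants n Γ, φ (a : Pn n) = i (ψ a : invariants n Γ))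
    (halg : ∀ u : K, ∃ p : Polynomial (Pn n), p ≠ 0 ∧ p.eval₂ i u = 0)
    (D : (Fin n ⊕ Fin n) → Derivation ℤ K K) (hD : ∀ j b, D j (i b) = i (pderiv j b)) :
    ∃ M : Mn n, ∀ k, φ (X k) = i (∑ j, M k j • X j) := by
  have := Fintype.ofFinite Γ
  have hintegral := incl_integral n Γ
  have hinj := incl_inj n Γ
  let ι := algebraMap (invariants n Γ) (Pn n)
  let ψr : invariants n Γ →+* invariants n Γ := (ψ : invariants n Γ ≃+* invariants n Γ)
  have hcomp : φ.comp ι = i.comp (ι.comp ψr) := RingHom.ext hφψ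
  have hιψ : (ι.comp ψr).IsIntegral :=
    RingHom.IsIntegral.trans _ _ (RingHom.isIntegral_of_surjective _ ψ.surjective) hintegral
  have hιψi : Function.Injective (ι.comp ψr) := hinj.comp ψ.injective
  -- integrality over `i` and `φ` agree
  have hiφ : ∀ u, i.IsIntegralElem u → φ.IsIntegralElem u := by
    intro u hu
    have := aux_trans _ i hιψ u hu
    rw [← hcomp] at this
    exact RingHom.isIntegralElem.of_comp _ _ this
  have hφi : ∀ u, φ.IsIntegralElem u → i.IsIntegralElem u := by
    intro u hu
    have := aux_trans ι φ hintegral u hu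
    rw [hcomp] at this
    exact RingHom.isIntegralElem.of_comp _ _ this
  have halgφ : ∀ u : K, ∃ p : Polynomial (Pn n), p ≠ 0 ∧ p.eval₂ φ u = 0 := by
    intro u
    obtain ⟨p, hp0, hp⟩ := aux_algtrans _ i hιψi hιψ u (halg u)
    refine ⟨p.map ι, (Polynomial.map_ne_zero_iff hinj).mpr hp0, ?_⟩
    rw [Polynomial.eval₂_map, hcomp, hp]
  have hDint : ∀ j k, i.IsIntegralElem (D j (φ (X k))) := by
    intro j k
    apply hφi
    rw [← linF_single]
    apply core_int n Γ hfin hsp K φ hφ halgφ (D j)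
    intro a
    rw [hφψ, hD]
    exact hiφ _ i.isIntegralElem_map
  -- Euler derivation
  let E : Derivation ℤ K K := ∑ j, i (X j) • D j
  have hEapp : ∀ u, E u = ∑ j, i (X j) * D j u := by
    intro u
    change (Derivation.coeFnAddMonoidHom (∑ j, i (X j) • D j)) u = _
    rw [map_sum, Finset.sum_apply]
    rfl
  have hEi : ∀ b, E (i b) = i (eulerE n b) := by
    intro b
    rw [hEapp, eulerE, map_sum]
    simp only [hD, map_mul]
  have hEφ : ∀ b, E (φ b) = φ (eulerE n b) := by
    let eD : Derivation ℂ (Pn n) (Pn n) := ∑ j, (X j : Pn n) • pderiv j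
    have heD : ∀ b, eD b = eulerE n b := by
      intro b
      change (Derivation.coeFnAddMonoidHom (∑ j, (X j : Pn n) • pderiv j)) b = _
      rw [map_sum, Finset.sum_apply]
      rfl
    let d : Pn n →+ K := (E : K →+ K).comp (φ : Pn n →+ K) - (φ : Pn n →+ K).comp (eD : Pn n →+ Pn n)
    have hdapp : ∀ b, d b = E (φ b) - φ (eD b) := fun b => rfl
    intro b
    have h0 : d b = 0 := by
      refine aux_uniq ι hinj φ hφ d ?_ ?_ b ?_
      · intro a b
        simp only [hdapp, map_mul, Derivation.leibniz, map_add, smul_eq_mul]; ring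
      · intro r
        change d (r : Pn n) = 0
        rw [← sum_homogeneousComponent (r : Pn n), map_sum]
        apply Finset.sum_eq_zero
        intro m _
        have hm := homComp_mem n Γ r r.2 m
        have hh := homogeneousComponent_isHomogeneous m (r : Pn n)
        rw [hdapp, heD, eulerE_hom n _ m hh]
        have h1 := hφψ ⟨_, hm⟩
        change φ (homogeneousComponent m (r : Pn n)) = _ at h1
        rw [map_nsmul, h1, hEi, eulerE_hom n _ m (hψ m ⟨_, hm⟩ hh), map_nsmul, sub_self]
      · obtain ⟨P, hPm, hP⟩ := hintegral b
        exact ⟨P, hPm.ne_zero, hP⟩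
    rw [hdapp, heD] at h0
    exact sub_eq_zero.mp h0
  have hEX : ∀ k, E (φ (X k)) = φ (X k) := by
    intro k
    rw [hEφ, eulerE_hom n _ 1 (isHomogeneous_X ℂ k), one_smul]
  have hED : ∀ j u, E (D j u) - D j (E u) + D j u = 0 := by
    intro j u
    let d : K →+ K := (E : K →+ K).comp (D j : K →+ K) - (D j : K →+ K).comp (E : K →+ K) + (D j : K →+ K)
    have hdapp : ∀ b, d b = E (D j b) - D j (E b) + D j b := fun b => rfl
    rw [← hdapp]
    refine aux_uniq i hi (RingHom.id K) Function.injective_id d ?_ ?_ u (halg u)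
    · intro a b
      simp only [hdapp, Derivation.leibniz, map_add, smul_eq_mul, RingHom.id_apply]; ring
    · intro r
      rw [hdapp, hD, hEi, hEi, hD, ← map_sub, ← map_add, eulerE_pderiv, map_zero]
  have hconst : ∀ k j, ∃ c : ℂ, D j (φ (X k)) = i (C c) := by
    intro k j
    apply aux_const n K i hi E hEi _ (hDint j k)
    have := hED j (φ (X k))
    rw [hEX, sub_add_cancel] at this
    exact this
  choose M hM using hconst
  refine ⟨M, fun k => ?_⟩
  rw [← hEX, hEapp, map_sum]
  refine Finset.sum_congr rfl fun j _ => ?_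
  rw [hM, MvPolynomial.smul_eq_C_mul, map_mul, mul_comm]

theorem aux_lift {R S K : Type*} [CommRing R] [IsDomain R] [CommRing S] [IsDomain S]
    [Field K] [IsAlgClosed K]
    (f : R →+* S) (hf : f.IsIntegral) (hfi : Function.Injective f)
    (g : R →+* K) (hg : Function.Injective g) :
    ∃ φ : S →+* K, Function.Injective φ ∧ ∀ r, φ (f r) = g r := by
  let : Algebra R S := f.toAlgebra
  let : Algebra R K := g.toAlgebra
  have : Algebra.IsIntegral R S := ⟨hf⟩
  have : FaithfulSMul R S := (faithfulSMul_iff_algebraMap_injective R S).mpr hfi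
  have : FaithfulSMul R K := (faithfulSMul_iff_algebraMap_injective R K).mpr hg
  let φ : S →ₐ[R] K := IsAlgClosed.lift
  have hc : ∀ r, φ (f r) = g r := fun r => φ.commutes r
  refine ⟨φ, ?_, hc⟩
  rw [RingHom.injective_iff_ker_eq_bot]
  apply Ideal.eq_bot_of_comap_eq_bot (R := R)
  rw [RingHom.comap_ker, ← RingHom.injective_iff_ker_eq_bot]
  intro a b hab
  apply hg
  rw [← hc, ← hc]
  exact hab

theorem der_zero (n : ℕ) (Γ : Subgroup (GLn n)) (hfin : Finite Γ) (w : (Fin n ⊕ Fin n) → Pn n)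
    (h : ∀ f ∈ invariants n Γ, ∑ k, w k * pderiv k f = 0) : w = 0 := by
  have := Fintype.ofFinite Γ
  let L := FractionRing (Pn n)
  have hL := IsFractionRing.injective (Pn n) L
  have : CharZero L := (RingHom.charZero_iff hL).mp inferInstance
  let e : Derivation ℂ (Pn n) (Pn n) := ∑ j, w j • pderiv j
  have he : ∀ b, e b = ∑ k, w k * pderiv k b := by
    intro b
    change (Derivation.coeFnAddMonoidHom (∑ j, w j • pderiv j)) b = _
    rw [map_sum, Finset.sum_apply]
    rfl
  let d : Pn n →+ L := (algebraMap (Pn n) L : Pn n →+ L).comp (e : Pn n →+ Pn n)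
  have hdapp : ∀ b, d b = algebraMap (Pn n) L (e b) := fun b => rfl
  funext j
  have h0 : d (X j) = 0 := by
    refine aux_uniq (algebraMap (invariants n Γ) (Pn n)) (incl_inj n Γ) (algebraMap (Pn n) L) hL
      d ?_ ?_ (X j) ?_
    · intro a b
      simp only [hdapp, Derivation.leibniz, map_add, smul_eq_mul, map_mul]
    · intro r
      rw [hdapp, he]
      have := h r r.2
      change algebraMap (Pn n) L (∑ k, w k * pderiv k (r : Pn n)) = 0
      rw [this, map_zero]
    · obtain ⟨P, hPm, hP⟩ := incl_integral n Γ (X j)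
      exact ⟨P, hPm.ne_zero, hP⟩
  rw [hdapp, he] at h0
  have h1 := (map_eq_zero_iff _ hL).mp h0
  rw [Finset.sum_eq_single j] at h1
  · simpa using h1
  · intro k _ hk
    simp [pderiv_X_of_ne hk.symm]
  · simp

theorem pbracket_eq (n : ℕ) (f h : Pn n) :
    pbracket n f h = - ∑ a, ∑ b, Matrix.J (Fin n) ℂ a b • (pderiv a f * pderiv b h) := by
  simp [pbracket, Matrix.J, Fintype.sum_sum_type, Matrix.one_apply, Finset.sum_neg_distrib]
  ring

theorem aux_perm {ι M : Type*} [Fintype ι] [AddCommMonoid M] (F : ι → ι → ι → ι → M) :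
    ∑ a, ∑ b, ∑ k, ∑ l, F a b k l = ∑ k, ∑ l, ∑ b, ∑ a, F a b k l := by
  calc ∑ a, ∑ b, ∑ k, ∑ l, F a b k l
      = ∑ a, ∑ k, ∑ b, ∑ l, F a b k l :=
        Finset.sum_congr rfl fun a _ => Finset.sum_comm
    _ = ∑ k, ∑ a, ∑ b, ∑ l, F a b k l := Finset.sum_comm
    _ = ∑ k, ∑ a, ∑ l, ∑ b, F a b k l :=
        Finset.sum_congr rfl fun k _ => Finset.sum_congr rfl fun a _ => Finset.sum_comm
    _ = ∑ k, ∑ l, ∑ a, ∑ b, F a b k l :=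
        Finset.sum_congr rfl fun k _ => Finset.sum_comm
    _ = ∑ k, ∑ l, ∑ b, ∑ a, F a b k l :=
        Finset.sum_congr rfl fun k _ => Finset.sum_congr rfl fun l _ => Finset.sum_comm

theorem pbracket_substG (n : ℕ) (A : Mn n) (f h : Pn n) :
    pbracket n (substG n A f) (substG n A h) = - ∑ k, ∑ l,
      (A * Matrix.J (Fin n) ℂ * A.transpose) k l • substG n A (pderiv k f * pderiv l h) := by
  rw [pbracket_eq, neg_inj]
  have hL : ∀ a b, Matrix.J (Fin n) ℂ a b • (pderiv a (substG n A f) * pderiv b (substG n A h))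
      = ∑ k, ∑ l, (A k a * Matrix.J (Fin n) ℂ a b * A l b) •
        substG n A (pderiv k f * pderiv l h) := by
    intro a b
    rw [pderiv_substG, pderiv_substG, Finset.sum_mul_sum, Finset.smul_sum]
    refine Finset.sum_congr rfl fun k _ => ?_
    rw [Finset.smul_sum]
    refine Finset.sum_congr rfl fun l _ => ?_
    rw [map_mul, smul_mul_smul_comm, smul_smul]
    rw [show Matrix.J (Fin n) ℂ a b * (A k a * A l b)
      = A k a * Matrix.J (Fin n) ℂ a b * A l b by ring]
  have hR : ∀ k l, (A * Matrix.J (Fin n) ℂ * A.transpose) k l •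
        substG n A (pderiv k f * pderiv l h)
      = ∑ b, ∑ a, (A k a * Matrix.J (Fin n) ℂ a b * A l b) •
        substG n A (pderiv k f * pderiv l h) := by
    intro k l
    rw [Matrix.mul_apply, Finset.sum_smul]
    refine Finset.sum_congr rfl fun b _ => ?_
    rw [Matrix.mul_apply, Finset.sum_mul, Finset.sum_smul]
    rfl
  calc _ = ∑ a, ∑ b, ∑ k, ∑ l, (A k a * Matrix.J (Fin n) ℂ a b * A l b) •
        substG n A (pderiv k f * pderiv l h) :=
        Finset.sum_congr rfl fun a _ => Finset.sum_congr rfl fun b _ => hL a b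
    _ = ∑ k, ∑ l, ∑ b, ∑ a, (A k a * Matrix.J (Fin n) ℂ a b * A l b) •
        substG n A (pderiv k f * pderiv l h) :=
        aux_perm fun a b k l => (A k a * Matrix.J (Fin n) ℂ a b * A l b) •
          substG n A (pderiv k f * pderiv l h)
    _ = _ := Finset.sum_congr rfl fun k _ => Finset.sum_congr rfl fun l _ => (hR k l).symm

theorem aux_alg {B L K : Type*} [CommRing B] [IsDomain B] [Field L] [Algebra B L]
    [IsFractionRing B L] [Field K] [Algebra L K] [Algebra.IsAlgebraic L K] (u : K) :
    ∃ p : Polynomial B, p ≠ 0 ∧ p.eval₂ ((algebraMap L K).comp (algebraMap B L)) u = 0 := by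
  let : Algebra B K := ((algebraMap L K).comp (algebraMap B L)).toAlgebra
  have : IsScalarTower B L K := IsScalarTower.of_algebraMap_eq fun _ => rfl
  exact (IsFractionRing.isAlgebraic_iff B L K).mpr (Algebra.IsAlgebraic.isAlgebraic u)

theorem pbracket_sympl (n : ℕ) (A : Mn n) (hA : A ∈ Matrix.symplecticGroup (Fin n) ℂ)
    (f h : Pn n) : pbracket n (substG n A f) (substG n A h) = substG n A (pbracket n f h) := by
  rw [pbracket_substG, SymplecticGroup.mem_iff.mp hA, pbracket_eq]
  simp only [map_neg, map_sum, map_smul]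

/-- for a finite subgroup `Γ ⊆ Sp(V)`, the assignment `g ↦ (f ↦ f ∘ g⁻¹)`
maps the normalizer `N_{Sp(V)}(Γ)` to graded Poisson automorphisms of `ℂ[V]^Γ`;
this map is surjective onto the group of all automorphisms of `ℂ[V]^Γ` preserving the
grading and the Poisson bracket, and its kernel is exactly `Γ`.  Consequently the graded
Poisson automorphism group of `ℂ[V]^Γ` is `N_{Sp(V)}(Γ)/Γ`. -/
theorem graded_poisson_automorphisms_of_invariants
    (n : ℕ) (Γ : Subgroup (GLn n)) (hfin : Finite Γ)
    (hsp : ∀ γ ∈ Γ, ((γ : GLn n) : Mn n) ∈ Matrix.symplecticGroup (Fin n) ℂ) :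
    -- well-definedness: any `g ∈ N_{Sp(V)}(Γ)` maps `ℂ[V]^Γ` into itself via `f ↦ f ∘ g⁻¹`
    (∀ g : GLn n, g ∈ Subgroup.normalizer Γ →
      ((g : Mn n) ∈ Matrix.symplecticGroup (Fin n) ℂ) →
      ∀ f ∈ invariants n Γ, substG n (((g⁻¹ : GLn n)) : Mn n) f ∈ invariants n Γ) ∧
    -- kernel: `g` acts as the identity on `ℂ[V]^Γ` if and only if `g ∈ Γ`
    (∀ g : GLn n, g ∈ Subgroup.normalizer Γ →
      ((g : Mn n) ∈ Matrix.symplecticGroup (Fin n) ℂ) →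
      ((∀ f ∈ invariants n Γ, substG n (((g⁻¹ : GLn n)) : Mn n) f = f) ↔ g ∈ Γ)) ∧
    -- surjectivity: every graded Poisson algebra automorphism of `ℂ[V]^Γ` arises this way
    (∀ ψ : invariants n Γ ≃ₐ[ℂ] invariants n Γ,
      (∀ (i : ℕ) (f : invariants n Γ), (f : Pn n).IsHomogeneous i →
        ((ψ f : invariants n Γ) : Pn n).IsHomogeneous i) →
      (∀ f g b : invariants n Γ, (b : Pn n) = pbracket n (f : Pn n) (g : Pn n) →
        ((ψ b : invariants n Γ) : Pn n)
          = pbracket n ((ψ f : invariants n Γ) : Pn n) ((ψ g : invariants n Γ) : Pn n)) →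
      ∃ g : GLn n, g ∈ Subgroup.normalizer Γ ∧
        ((g : Mn n) ∈ Matrix.symplecticGroup (Fin n) ℂ) ∧
        ∀ f : invariants n Γ, ((ψ f : invariants n Γ) : Pn n)
          = substG n (((g⁻¹ : GLn n)) : Mn n) (f : Pn n)) := by
  classical
  refine ⟨?_, ?_, ?_⟩
  · intro g hg _ f hf γ hγ
    have h1 : g⁻¹ * γ * g ∈ Γ := by
      have := (Subgroup.mem_normalizer_iff.mp (inv_mem hg) γ).mp hγ
      simpa using this
    rw [substG_comp, ← Units.val_mul]
    have h2 : g⁻¹ * γ = (g⁻¹ * γ * g) * g⁻¹ := by group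
    rw [h2, Units.val_mul, ← substG_comp, hf _ h1]
  · intro g _ _
    constructor
    · intro h
      have := ker_lemma n Γ hfin g⁻¹ h
      simpa using this
    · intro h f hf
      exact hf _ (inv_mem h)
  · intro ψ hψ hpois
    have := Fintype.ofFinite Γ
    let L := FractionRing (Pn n)
    let K := AlgebraicClosure L
    have hL := IsFractionRing.injective (Pn n) L
    have : CharZero L := (RingHom.charZero_iff hL).mp inferInstance
    have : CharZero K := (RingHom.charZero_iff (algebraMap L K).injective).mp inferInstance
    let i : Pn n →+* K := (algebraMap L K).comp (algebraMap (Pn n) L)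
    have hi : Function.Injective i := (algebraMap L K).injective.comp hL
    let ψr : invariants n Γ →+* invariants n Γ := (ψ : invariants n Γ ≃+* invariants n Γ)
    obtain ⟨φ, hφ, hφψ⟩ := aux_lift (algebraMap (invariants n Γ) (Pn n)) (incl_integral n Γ)
      (incl_inj n Γ) (i.comp ((algebraMap (invariants n Γ) (Pn n)).comp ψr))
      (hi.comp ((incl_inj n Γ).comp ψ.injective))
    have hφψ' : ∀ a : invariants n Γ, φ (a : Pn n) = i (ψ a : invariants n Γ) := hφψ
    have halg : ∀ u : K, ∃ p : Polynomial (Pn n), p ≠ 0 ∧ p.eval₂ i u = 0 := by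
      intro u
      exact aux_alg (L := L) u
    choose D hD using fun j => aux_ext n K (pderiv j)
    obtain ⟨M, hM⟩ := core n Γ hfin hsp ψ hψ K i φ hi hφ hφψ' halg D hD
    have hφM : φ = i.comp (substG n M).toRingHom := by
      apply MvPolynomial.ringHom_ext
      · intro c
        have h1 := hφψ' (algebraMap ℂ (invariants n Γ) c)
        rw [ψ.commutes] at h1
        change φ (C c) = i (C c) at h1
        change φ (C c) = i (substG n M (algebraMap ℂ (Pn n) c))
        rw [AlgHom.commutes]
        exact h1
      · intro k
        rw [hM]
        change _ = i (substG n M (X k))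
        rw [substG_X]
    have hMinj : Function.Injective (substG n M) := by
      have : Function.Injective (i.comp (substG n M).toRingHom) := hφM ▸ hφ
      intro a b hab
      exact this (congrArg i hab)
    have hψM : ∀ f : invariants n Γ, ((ψ f : invariants n Γ) : Pn n) = substG n M (f : Pn n) := by
      intro f
      apply hi
      rw [← hφψ', hφM]
      rfl
    have hdet : M.det ≠ 0 := by
      intro h0
      obtain ⟨v, hv, hv0⟩ := Matrix.exists_vecMul_eq_zero_iff.mpr h0
      apply hv
      apply linF_inj n
      apply hMinj
      rw [substG_linF, hv0]
      simp
    let m : GLn n := Matrix.GeneralLinearGroup.mkOfDetNeZero M hdet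
    have hm : (m : Mn n) = M := rfl
    refine ⟨m⁻¹, ?_, ?_, ?_⟩
    · rw [Subgroup.mem_normalizer_iff]
      intro h
      rw [inv_inv]
      constructor
      · intro hh
        apply ker_lemma n Γ hfin
        intro f hf
        obtain ⟨f', hf'⟩ := ψ.surjective ⟨f, hf⟩
        have h1 : f = substG n M f' := by rw [← hψM, hf']
        rw [Units.val_mul, Units.val_mul, ← substG_comp, ← substG_comp]
        have h2 : substG n ((m⁻¹ : GLn n) : Mn n) f = f' := by
          rw [h1, substG_comp, ← hm, ← Units.val_mul]
          simp [substG_one]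
        rw [h2, f'.2 h hh, hm, h1]
      · intro hh
        apply ker_lemma n Γ hfin
        intro f hf
        have h3 : h = m * (m⁻¹ * h * m) * m⁻¹ := by group
        rw [h3, Units.val_mul, Units.val_mul m, ← substG_comp, ← substG_comp]
        have h4 : substG n (m : Mn n) f ∈ invariants n Γ := by
          have := hψM ⟨f, hf⟩
          rw [hm]
          change _ = substG n M f at this
          rw [← this]
          exact (ψ ⟨f, hf⟩).2
        rw [h4 _ hh, substG_comp, ← Units.val_mul]
        simp [substG_one]
    · have hMs : M * Matrix.J (Fin n) ℂ * M.transpose = Matrix.J (Fin n) ℂ := by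
        set T : Mn n := M * Matrix.J (Fin n) ℂ * M.transpose - Matrix.J (Fin n) ℂ with hT
        have hzero : ∀ f ∈ invariants n Γ, ∀ h ∈ invariants n Γ,
            ∑ k, ∑ l, T k l • (pderiv k f * pderiv l h) = 0 := by
          intro f hf h hh
          have hb : pbracket n f h ∈ invariants n Γ := by
            intro γ hγ
            rw [← pbracket_sympl n _ (hsp γ hγ), hf γ hγ, hh γ hγ]
          have h1 := hpois ⟨f, hf⟩ ⟨h, hh⟩ ⟨_, hb⟩ rfl
          rw [hψM, hψM, hψM] at h1
          change substG n M (pbracket n f h) = pbracket n (substG n M f) (substG n M h) at h1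
          rw [pbracket_substG, pbracket_eq, map_neg, neg_inj] at h1
          apply hMinj
          simp only [map_sum, map_smul] at h1 ⊢
          simp only [hT, Matrix.sub_apply, sub_smul, Finset.sum_sub_distrib, ← h1, sub_self,
            map_zero]
        have h2 : ∀ h ∈ invariants n Γ, ∀ k, ∑ l, C (T k l) * pderiv l h = 0 := by
          intro h hh
          have := der_zero n Γ hfin (fun k => ∑ l, C (T k l) * pderiv l h) (by
            intro f hf
            rw [← hzero f hf h hh]
            refine Finset.sum_congr rfl fun k _ => ?_
            rw [Finset.sum_mul]
            refine Finset.sum_congr rfl fun l _ => ?_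
            rw [MvPolynomial.smul_eq_C_mul]; ring)
          exact fun k => congrFun this k
        have h3 : T = 0 := by
          ext k l
          have := der_zero n Γ hfin (fun l => C (T k l)) (fun f hf => h2 f hf k)
          have := congrFun this l
          simpa using this
        exact sub_eq_zero.mp h3
      rw [SymplecticGroup.mem_iff]
      have h1 : ((m⁻¹ : GLn n) : Mn n) * M = 1 := by
        rw [← hm, ← Units.val_mul]; simp
      have h2 : M.transpose * ((m⁻¹ : GLn n) : Mn n).transpose = 1 := by
        rw [← Matrix.transpose_mul, h1, Matrix.transpose_one]
      set N := ((m⁻¹ : GLn n) : Mn n)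
      calc N * Matrix.J (Fin n) ℂ * N.transpose
          = N * (M * Matrix.J (Fin n) ℂ * M.transpose) * N.transpose := by rw [hMs]
        _ = (N * M) * Matrix.J (Fin n) ℂ * (M.transpose * N.transpose) := by noncomm_ring
        _ = Matrix.J (Fin n) ℂ := by rw [h1, h2, one_mul, mul_one]
    · intro f
      rw [inv_inv, hψM, hm]
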